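/- arXiv:1901.09254 — 2 statements merged into one kernel-verified Lean document; each statement's English description precedes it below -/
import Mathlib

section
/- Let V, W, Z be Banach spaces with Z finite dimensional. If Z × V is isomorphic (as topological vector spaces, via a continuous linear equivalence) to Z × W, then V is isomorphic to W. -/
/-!
Identify `X = Z × V` with `Z × W` and let `f g : X → Z` be the two first projections, so that `V`
and `W` are their kernels. Any `s : Z → X` for which both `f ∘ s` and `g ∘ s` are invertible has a
range complementary to both kernels, whence `V ≃ X ⧸ range s ≃ W`. If `s₀` and `s₁` are sections of
`f` and `g`, then `s = s₀ + c • s₁` has `f ∘ s = 1 + c • b` and `g ∘ s = a + c • 1` with `a`, `b`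
endomorphisms of `Z`; as their spectra are finite, both are invertible for some scalar `c`.
-/

open ContinuousLinearMap

section Spectrum

variable {𝕜 A : Type*} [Field 𝕜] [Ring A] [Algebra 𝕜 A] {a b : A}

theorem finite_spectrum_of_isIntegral (ha : IsIntegral 𝕜 a) : (spectrum 𝕜 a).Finite := by
  nontriviality A
  refine (Polynomial.finite_setOfPred_isRoot (minpoly.ne_zero ha)).subset fun c hc ↦ ?_
  have hmem := spectrum.subset_polynomial_aeval a (minpoly 𝕜 a) (Set.mem_image_of_mem _ hc)
  rwa [minpoly.aeval, spectrum.zero_eq] at hmem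

theorem isUnit_add_smul_one_of_neg_notMem_spectrum {c : 𝕜} (hc : -c ∉ spectrum 𝕜 a) :
    IsUnit (a + c • 1) := by
  rw [spectrum.notMem_iff, ← IsUnit.neg_iff] at hc
  simpa [Algebra.algebraMap_eq_smul_one] using hc

theorem exists_isUnit_one_add_smul_and_isUnit_add_smul_one [Infinite 𝕜]
    (ha : IsIntegral 𝕜 a) (hb : IsIntegral 𝕜 b) :
    ∃ c : 𝕜, IsUnit (1 + c • b) ∧ IsUnit (a + c • 1) := by
  have hfin : ({0} ∪ {c | -c ∈ spectrum 𝕜 a} ∪ {c | -c⁻¹ ∈ spectrum 𝕜 b}).Finite :=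
    ((Set.finite_singleton 0).union
      ((finite_spectrum_of_isIntegral ha).preimage neg_injective.injOn)).union
      ((finite_spectrum_of_isIntegral hb).preimage (neg_injective.comp inv_injective).injOn)
  obtain ⟨c, hc⟩ := hfin.exists_notMem
  simp only [Set.mem_union, Set.mem_singleton_iff, Set.mem_ofPred_eq, not_or] at hc
  obtain ⟨⟨hc₀, hca⟩, hcb⟩ := hc
  have hscale : 1 + c • b = Units.mk0 c hc₀ • (b + c⁻¹ • 1) := by
    simp [Units.smul_def, smul_smul, hc₀, add_comm]
  refine ⟨c, ?_, isUnit_add_smul_one_of_neg_notMem_spectrum hca⟩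
  rw [hscale, isUnit_smul_iff]
  exact isUnit_add_smul_one_of_neg_notMem_spectrum hcb

end Spectrum

section Complement

variable {R X Z V : Type*} [Ring R]
  [AddCommGroup X] [Module R X] [TopologicalSpace X]
  [AddCommGroup Z] [Module R Z] [TopologicalSpace Z]
  [AddCommGroup V] [Module R V] [TopologicalSpace V]

theorem isTopCompl_range_ker_of_isUnit_comp {f : X →L[R] Z} {s : Z →L[R] X}
    (h : IsUnit (f ∘L s)) : s.range.IsTopCompl f.ker := by
  obtain ⟨u, hu⟩ := h
  let r : X →L[R] Z := (↑u⁻¹ : Z →L[R] Z) ∘L f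
  have hleft : Function.LeftInverse r s := fun z ↦ by
    have hinv : (↑u⁻¹ : Z →L[R] Z) * (f ∘L s) = 1 := hu ▸ u.inv_mul
    exact congr($hinv z)
  have hinj : Function.Injective (↑u⁻¹ : Z →L[R] Z) :=
    Function.LeftInverse.injective (g := (u : Z →L[R] Z)) fun z ↦ congr($u.mul_inv z)
  have hker : r.ker = f.ker := LinearMap.ker_comp_of_ker_eq_bot _ (LinearMap.ker_eq_bot.2 hinj)
  exact hker ▸ s.isTopCompl_range_ker_of_leftInverse r hleft

theorem nonempty_ker_fst_comp_equiv (e : X ≃L[R] Z × V) :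
    Nonempty ((fst R Z V ∘L (e : X →L[R] Z × V)).ker ≃L[R] V) := by
  let K : Submodule R X := (fst R Z V ∘L (e : X →L[R] Z × V)).ker
  let toV : K →L[R] V := snd R Z V ∘L (e : X →L[R] Z × V) ∘L K.subtypeL
  let ofV : V →L[R] K :=
    ((e.symm : Z × V →L[R] X) ∘L inr R Z V).codRestrict K fun v ↦ by simp [K]
  refine ⟨.equivOfInverse toV ofV (fun x ↦ Subtype.ext ?_) fun v ↦ ?_⟩
  · have hx : (0, (e x).2) = e x := Prod.ext x.2.symm rfl
    exact e.symm_apply_eq.2 hx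
  · exact congr(Prod.snd $(e.apply_symm_apply (0, v)))

theorem nonempty_quotient_range_equiv_of_isUnit [IsTopologicalAddGroup X]
    (e : X ≃L[R] Z × V) {s : Z →L[R] X}
    (h : IsUnit ((fst R Z V ∘L (e : X →L[R] Z × V)) ∘L s)) :
    Nonempty ((X ⧸ s.range) ≃L[R] V) :=
  (nonempty_ker_fst_comp_equiv e).map
    (Submodule.quotientEquivOfIsTopCompl _ _ (isTopCompl_range_ker_of_isUnit_comp h)).trans

end Complement

theorem finite_dim_cancellation_general {𝕜 V W Z : Type*} [Field 𝕜] [Infinite 𝕜]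
    [AddCommGroup V] [Module 𝕜 V] [TopologicalSpace V] [IsTopologicalAddGroup V]
    [AddCommGroup W] [Module 𝕜 W] [TopologicalSpace W]
    [AddCommGroup Z] [Module 𝕜 Z] [TopologicalSpace Z] [IsTopologicalAddGroup Z]
    [ContinuousConstSMul 𝕜 Z] [FiniteDimensional 𝕜 Z]
    (h : Nonempty ((Z × V) ≃L[𝕜] (Z × W))) :
    Nonempty (V ≃L[𝕜] W) := by
  obtain ⟨e⟩ := h
  let s₁ : Z →L[𝕜] Z × V := (e.symm : Z × W →L[𝕜] Z × V) ∘L inl 𝕜 Z W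
  let a : Z →L[𝕜] Z := fst 𝕜 Z W ∘L e ∘L inl 𝕜 Z V
  let b : Z →L[𝕜] Z := fst 𝕜 Z V ∘L s₁
  obtain ⟨c, hV, hW⟩ := exists_isUnit_one_add_smul_and_isUnit_add_smul_one
    (Algebra.IsIntegral.isIntegral (R := 𝕜) a) (Algebra.IsIntegral.isIntegral (R := 𝕜) b)
  -- `c` is applied in `Z`, where multiplication by a scalar is continuous.
  let s : Z →L[𝕜] Z × V := inl 𝕜 Z V + s₁ ∘L (c • 1)
  have hsV : (fst 𝕜 Z V ∘L ContinuousLinearEquiv.refl 𝕜 (Z × V)) ∘L s = 1 + c • b := by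
    ext z
    simp [s, b]
  have hsW : (fst 𝕜 Z W ∘L e) ∘L s = a + c • 1 := by
    ext z
    simp [s, s₁, a]
  obtain ⟨eV⟩ := nonempty_quotient_range_equiv_of_isUnit (.refl 𝕜 (Z × V)) (hsV ▸ hV)
  obtain ⟨eW⟩ := nonempty_quotient_range_equiv_of_isUnit e (hsW ▸ hW)
  exact ⟨eV.symm.trans eW⟩

theorem finite_dim_cancellation
    (V W Z : Type*)
    [NormedAddCommGroup V] [NormedSpace ℂ V] [CompleteSpace V]
    [NormedAddCommGroup W] [NormedSpace ℂ W] [CompleteSpace W]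
    [NormedAddCommGroup Z] [NormedSpace ℂ Z] [CompleteSpace Z]
    [FiniteDimensional ℂ Z]
    (h : Nonempty ((Z × V) ≃L[ℂ] (Z × W))) :
    Nonempty (V ≃L[ℂ] W) :=
  finite_dim_cancellation_general h
end

section
/- If Banach spaces Z₁ and Z₂ are each stable under finite dimensional quotients, then their direct sum Z₁ × Z₂ is stable under finite dimensional quotients. -/
/-- A Banach space `Z` is *stable under finite dimensional quotients* if `Z` is
isomorphic (via a continuous linear equivalence) to every closed subspace of `Z`
that admits a finite dimensional complement. -/
def StableUnderFinDimQuotients (Z : Type*) [NormedAddCommGroup Z] [NormedSpace ℂ Z] : Prop :=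
  ∀ V F : Submodule ℂ Z, IsClosed (V : Set Z) → IsCompl V F → FiniteDimensional ℂ F →
    Nonempty (Z ≃L[ℂ] V)

/-! A nonzero space `Z` is stable if and only if `Z ≃ Z × ℂ`, and this condition passes from either
factor to the product. If `Z` is stable, it is isomorphic to a closed hyperplane `H`, whence
`Z ≃ H × ℂ ≃ Z × ℂ`. Conversely, if `Z ≃ Z × ℂ` and `Z ≃ V × ℂ ^ n`, the factors `ℂ` can be
cancelled one at a time: isomorphisms `E ≃ V × ℂ` and `E ≃ W × ℂ` exhibit `V` and `W` as kernels of
nonzero continuous functionals on `E`, and any two such kernels are isomorphic because they have a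
common complement, spanned by a vector at which neither functional vanishes. -/

open ContinuousLinearMap Submodule

theorem exists_apply_ne_zero_and_apply_ne_zero {M N N' F G : Type*} [AddZeroClass M]
    [AddZeroClass N] [AddZeroClass N'] [FunLike F M N] [AddMonoidHomClass F M N] [FunLike G M N']
    [AddMonoidHomClass G M N'] {f : F} {g : G} (hf : ∃ x, f x ≠ 0) (hg : ∃ x, g x ≠ 0) :
    ∃ x, f x ≠ 0 ∧ g x ≠ 0 := by
  obtain ⟨x, hx⟩ := hf
  obtain ⟨y, hy⟩ := hg
  by_cases hgx : g x = 0
  · by_cases hfy : f y = 0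
    · exact ⟨x + y, by simpa [hfy] using hx, by simpa [hgx] using hy⟩
    · exact ⟨y, hfy, hy⟩
  · exact ⟨x, hx, hgx⟩

/-- The kernel of the second coordinate of a product decomposition `E ≃ M × N`, identified with the
first factor `M`. It turns a comparison of factors into a comparison of kernels of maps on `E`. -/
def kerSndCompEquiv {R E M N : Type*} [Semiring R] [AddCommMonoid E] [Module R E]
    [TopologicalSpace E] [AddCommMonoid M] [Module R M] [TopologicalSpace M] [AddCommMonoid N]
    [Module R N] [TopologicalSpace N] (e : E ≃L[R] (M × N)) :
    (snd R M N ∘L e.toContinuousLinearMap).ker ≃L[R] M where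
  toFun x := (e x).1
  map_add' x y := congrArg Prod.fst (map_add e (x : E) y)
  map_smul' c x := congrArg Prod.fst (map_smul e c (x : E))
  invFun m := ⟨e.symm (m, 0), by simp⟩
  left_inv x := by
    have hx : (e x).2 = 0 := x.2
    ext
    simp [← hx]
  right_inv m := by simp
  continuous_toFun := by fun_prop
  continuous_invFun := by fun_prop

section Cancellation

variable {𝕜 E V W : Type*} [Field 𝕜] [TopologicalSpace 𝕜]
  [AddCommGroup E] [Module 𝕜 E] [TopologicalSpace E] [ContinuousSMul 𝕜 E]
  [AddCommGroup V] [Module 𝕜 V] [TopologicalSpace V]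
  [AddCommGroup W] [Module 𝕜 W] [TopologicalSpace W]

theorem isTopCompl_span_singleton_ker {f : E →L[𝕜] 𝕜} {x : E} (hx : f x ≠ 0) :
    IsTopCompl (𝕜 ∙ x) f.ker := by
  have hinv : Function.LeftInverse f (toSpanSingleton 𝕜 ((f x)⁻¹ • x)) := fun c ↦ by simp [hx]
  have hspan : (toSpanSingleton 𝕜 ((f x)⁻¹ • x)).range = 𝕜 ∙ x := by
    rw [toLinearMap_toSpanSingleton, LinearMap.range_toSpanSingleton,
      span_singleton_smul_eq (inv_ne_zero hx).isUnit]
  exact hspan ▸ isTopCompl_range_ker_of_leftInverse _ f hinv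

theorem nonempty_ker_equiv_ker [IsTopologicalAddGroup E] {f g : E →L[𝕜] 𝕜} (hf : f ≠ 0)
    (hg : g ≠ 0) : Nonempty (f.ker ≃L[𝕜] g.ker) := by
  obtain ⟨x, hfx, hgx⟩ := exists_apply_ne_zero_and_apply_ne_zero
    (DFunLike.ne_iff.mp hf) (DFunLike.ne_iff.mp hg)
  exact ⟨(quotientEquivOfIsTopCompl _ _ (isTopCompl_span_singleton_ker hfx)).symm.trans
    (quotientEquivOfIsTopCompl _ _ (isTopCompl_span_singleton_ker hgx))⟩

theorem nonempty_equiv_of_equiv_prod_of_equiv_prod [IsTopologicalAddGroup E]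
    (e : E ≃L[𝕜] (V × 𝕜)) (e' : E ≃L[𝕜] (W × 𝕜)) : Nonempty (V ≃L[𝕜] W) := by
  have hV : snd 𝕜 V 𝕜 ∘L e.toContinuousLinearMap ≠ 0 :=
    DFunLike.ne_iff.mpr ⟨e.symm (0, 1), by simp⟩
  have hW : snd 𝕜 W 𝕜 ∘L e'.toContinuousLinearMap ≠ 0 :=
    DFunLike.ne_iff.mpr ⟨e'.symm (0, 1), by simp⟩
  obtain ⟨k⟩ := nonempty_ker_equiv_ker hV hW
  exact ⟨(kerSndCompEquiv e).symm.trans (k.trans (kerSndCompEquiv e'))⟩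

theorem nonempty_equiv_of_equiv_prod_self_of_equiv_prod_pi [IsTopologicalAddGroup E]
    (e : E ≃L[𝕜] (E × 𝕜)) {n : ℕ} (e' : E ≃L[𝕜] (V × (Fin n → 𝕜))) : Nonempty (E ≃L[𝕜] V) := by
  induction n with
  | zero => exact ⟨e'.trans (.prodUnique 𝕜 V _)⟩
  | succ n ih =>
    let split : (V × (Fin (n + 1) → 𝕜)) ≃L[𝕜] ((V × (Fin n → 𝕜)) × 𝕜) :=
      ((ContinuousLinearEquiv.refl 𝕜 V).prodCongr
        ((Fin.consEquivL 𝕜 fun _ ↦ 𝕜).symm.trans (.prodComm 𝕜 _ _))).trans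
        (ContinuousLinearEquiv.prodAssoc 𝕜 _ _ _).symm
    obtain ⟨e''⟩ := nonempty_equiv_of_equiv_prod_of_equiv_prod e (e'.trans split)
    exact ih e''

end Cancellation

namespace StableUnderFinDimQuotients

variable {Z Z' : Type*} [NormedAddCommGroup Z] [NormedSpace ℂ Z]
  [NormedAddCommGroup Z'] [NormedSpace ℂ Z']

theorem nonempty_equiv_prod [Nontrivial Z] (h : StableUnderFinDimQuotients Z) :
    Nonempty (Z ≃L[ℂ] (Z × ℂ)) := by
  obtain ⟨x, hx⟩ := exists_ne (0 : Z)
  obtain ⟨f, hfx⟩ := SeparatingDual.exists_eq_one (R := ℂ) hx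
  have hcompl : IsCompl f.ker (ℂ ∙ x) :=
    (isTopCompl_span_singleton_ker (by simp [hfx])).isCompl.symm
  obtain ⟨e⟩ := h f.ker (ℂ ∙ x) f.isClosed_ker hcompl inferInstance
  let split : Z ≃L[ℂ] (ℂ × f.ker) :=
    .equivOfRightInverse f (toSpanSingleton ℂ x) fun c ↦ by simp [hfx]
  exact ⟨split.trans ((ContinuousLinearEquiv.prodComm ℂ _ _).trans (e.symm.prodCongr (.refl ℂ ℂ)))⟩

theorem of_equiv_prod (e : Z ≃L[ℂ] (Z × ℂ)) : StableUnderFinDimQuotients Z := by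
  intro V F hV hVF _
  let coords : F ≃L[ℂ] (Fin (Module.finrank ℂ F) → ℂ) := .ofFinrankEq (by simp)
  let split : (V × F) ≃L[ℂ] Z :=
    prodEquivOfIsTopCompl V F (hVF.isTopCompl_of_isClosed_of_finiteDimensional hV)
  exact nonempty_equiv_of_equiv_prod_self_of_equiv_prod_pi e
    (split.symm.trans ((ContinuousLinearEquiv.refl ℂ V).prodCongr coords))

theorem of_subsingleton [Subsingleton Z] : StableUnderFinDimQuotients Z :=
  fun V _ _ _ _ ↦ ⟨(0 : Z ≃ₗ[ℂ] V).toContinuousLinearEquiv⟩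

theorem congr (h : StableUnderFinDimQuotients Z) (e : Z ≃L[ℂ] Z') :
    StableUnderFinDimQuotients Z' := by
  rcases subsingleton_or_nontrivial Z with _ | _
  · have : Subsingleton Z' := e.symm.injective.subsingleton
    exact of_subsingleton
  · obtain ⟨e₁⟩ := h.nonempty_equiv_prod
    exact of_equiv_prod (e.symm.trans (e₁.trans (e.prodCongr (.refl ℂ ℂ))))

theorem prod_of_nontrivial_right [Nontrivial Z'] (h : StableUnderFinDimQuotients Z') :
    StableUnderFinDimQuotients (Z × Z') := by
  obtain ⟨e⟩ := h.nonempty_equiv_prod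
  exact of_equiv_prod (((ContinuousLinearEquiv.refl ℂ Z).prodCongr e).trans
    (ContinuousLinearEquiv.prodAssoc ℂ Z Z' ℂ).symm)

end StableUnderFinDimQuotients

theorem stable_prod_general
    (Z₁ Z₂ : Type*)
    [NormedAddCommGroup Z₁] [NormedSpace ℂ Z₁]
    [NormedAddCommGroup Z₂] [NormedSpace ℂ Z₂]
    (h₁ : StableUnderFinDimQuotients Z₁) (h₂ : StableUnderFinDimQuotients Z₂) :
    StableUnderFinDimQuotients (Z₁ × Z₂) := by
  rcases subsingleton_or_nontrivial Z₂ with _ | _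
  · let _ : Unique Z₂ := uniqueOfSubsingleton 0
    exact h₁.congr (ContinuousLinearEquiv.prodUnique ℂ Z₁ Z₂).symm
  · exact h₂.prod_of_nontrivial_right

theorem stable_prod
    (Z₁ Z₂ : Type*)
    [NormedAddCommGroup Z₁] [NormedSpace ℂ Z₁] [CompleteSpace Z₁]
    [NormedAddCommGroup Z₂] [NormedSpace ℂ Z₂] [CompleteSpace Z₂]
    (h₁ : StableUnderFinDimQuotients Z₁) (h₂ : StableUnderFinDimQuotients Z₂) :
    StableUnderFinDimQuotients (Z₁ × Z₂) :=
  stable_prod_general Z₁ Z₂ h₁ h₂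
end
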